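/- Suppose all transactions are write-only with nonempty write sets, every transaction has |W i| ≤ λ_max, and every duration satisfies τ_min ≤ τ i ≤ 2·τ_min for some τ_min ≥ 1. Then there exists a valid schedule σ such that for every valid schedule σ′, the makespan of σ is at most (2·λ_max + 2) times the makespan of σ′. -/

import Mathlib

/-- Two distinct transactions conflict if one writes a resource the other accesses. -/
def Conflict {ι : Type*} {s : ℕ} (W Rd : ι → Finset (Fin s)) (i j : ι) : Prop :=
  i ≠ j ∧ (((W i) ∩ (W j ∪ Rd j)).Nonempty ∨ ((W j) ∩ (W i ∪ Rd i)).Nonempty)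

/-- A schedule is valid if conflicting transactions execute in disjoint time intervals. -/
def ValidSchedule {ι : Type*} {s : ℕ} (W Rd : ι → Finset (Fin s)) (τ : ι → ℕ)
    (σ : ι → ℕ) : Prop :=
  ∀ i j : ι, Conflict W Rd i j →
    Disjoint (Finset.Ico (σ i) (σ i + τ i)) (Finset.Ico (σ j) (σ j + τ j))

/-- The makespan of a schedule. -/
def makespan {ι : Type*} [Fintype ι] (τ : ι → ℕ) (σ : ι → ℕ) : ℕ :=
  Finset.univ.sup fun i => σ i + τ i

/-!
The inequality alone holds with factor `1` for any schedule of minimal makespan.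
The content lies in an explicit schedule: colour the conflict graph greedily and run each colour
class in its own time slot, long enough for every transaction. If `γ` is the
largest number of writers of a resource, a transaction writing at most `l` resources conflicts with
at most `l * γ` others, so `l * γ + 1` slots suffice. Conversely the writers of one resource
pairwise conflict and are thus serialized by every valid schedule, whose makespan is therefore at
least `γ` times the least duration.
-/

section GreedyColoring

variable {V : Type*} {G : SimpleGraph V} {d : ℕ}

theorem exists_color_ne_of_adj {v : V} [Fintype (G.neighborSet v)] (hd : G.degree v ≤ d)
    (c : V → Fin (d + 1)) : ∃ x, ∀ w, G.Adj v w → c w ≠ x := by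
  have hcard : ((G.neighborFinset v).image c).card < (Finset.univ : Finset (Fin (d + 1))).card :=
    calc ((G.neighborFinset v).image c).card ≤ G.degree v := Finset.card_image_le
      _ < d + 1 := Nat.lt_succ_of_le hd
      _ = (Finset.univ : Finset (Fin (d + 1))).card := (Finset.card_fin _).symm
  obtain ⟨x, -, hx⟩ := Finset.exists_mem_notMem_of_card_lt_card hcard
  refine ⟨x, fun w hw hcw => hx ?_⟩
  exact Finset.mem_image.2 ⟨w, (G.mem_neighborFinset v w).2 hw, hcw⟩

theorem exists_partial_coloring_of_degree_le [G.LocallyFinite] (hd : ∀ v, G.degree v ≤ d)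
    (S : Finset V) :
    ∃ c : V → Fin (d + 1), ∀ v ∈ S, ∀ w ∈ S, G.Adj v w → c v ≠ c w := by
  classical
  induction S using Finset.induction_on with
  | empty => exact ⟨fun _ => 0, by simp⟩
  | insert a S ha ih =>
    obtain ⟨c, hc⟩ := ih
    obtain ⟨x, hx⟩ := exists_color_ne_of_adj (hd a) c
    have hne : ∀ v ∈ S, v ≠ a := fun v hv => ne_of_mem_of_not_mem hv ha
    refine ⟨Function.update c a x, fun v hv w hw hvw => ?_⟩
    rcases Finset.mem_insert.1 hv with rfl | hvS <;> rcases Finset.mem_insert.1 hw with rfl | hwS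
    · exact absurd hvw G.irrefl
    · simpa [hne w hwS] using (hx w hvw).symm
    · simpa [hne v hvS] using hx v hvw.symm
    · simpa [hne v hvS, hne w hwS] using hc v hvS w hwS hvw

theorem colorable_succ_of_degree_le [Finite V] [G.LocallyFinite] (hd : ∀ v, G.degree v ≤ d) :
    G.Colorable (d + 1) := by
  have := Fintype.ofFinite V
  obtain ⟨c, hc⟩ := exists_partial_coloring_of_degree_le hd Finset.univ
  exact ⟨SimpleGraph.Coloring.mk c fun {v w} => hc v (Finset.mem_univ v) w (Finset.mem_univ w)⟩

end GreedyColoring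

section Scheduling

variable {ι : Type*} {s : ℕ} {W Rd : ι → Finset (Fin s)} {τ σ : ι → ℕ}

theorem Conflict.symm {i j : ι} (h : Conflict W Rd i j) : Conflict W Rd j i :=
  ⟨h.1.symm, h.2.symm⟩

theorem conflict_of_mem_write {i j : ι} {r : Fin s} (hij : i ≠ j) (hi : r ∈ W i) (hj : r ∈ W j) :
    Conflict W Rd i j :=
  ⟨hij, .inl ⟨r, Finset.mem_inter.2 ⟨hi, Finset.mem_union_left _ hj⟩⟩⟩

theorem Conflict.exists_mem_write (hRd : ∀ i, Rd i ⊆ W i) {i j : ι} (h : Conflict W Rd i j) :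
    ∃ r ∈ W i, r ∈ W j := by
  rcases h.2 with ⟨r, hr⟩ | ⟨r, hr⟩ <;>
    rw [Finset.union_eq_left.2 (hRd _), Finset.mem_inter] at hr
  · exact ⟨r, hr.1, hr.2⟩
  · exact ⟨r, hr.2, hr.1⟩

/-- The conflict graph of a family of transactions: the vertices are the transactions and the
edges join conflicting ones. Its colour classes can be run in parallel. -/
def conflictGraph (W Rd : ι → Finset (Fin s)) : SimpleGraph ι where
  Adj := Conflict W Rd
  symm := ⟨fun _ _ => Conflict.symm⟩
  loopless := ⟨fun _ h => h.1 rfl⟩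

/-- The schedule that divides time into consecutive slots of length `T` and starts transaction `i`
at the beginning of slot `c i`, slots being numbered from `0`. -/
def slotSchedule (T : ℕ) (c : ι → ℕ) : ι → ℕ := fun i => c i * T

theorem disjoint_Ico_slot {a b m n T : ℕ} (ha : a ≤ T) (hmn : m < n) :
    Disjoint (Finset.Ico (m * T) (m * T + a)) (Finset.Ico (n * T) (n * T + b)) := by
  have hend : m * T + a ≤ n * T :=
    calc m * T + a ≤ (m + 1) * T := by rw [Nat.succ_mul]; gcongr
      _ ≤ n * T := Nat.mul_le_mul_right T hmn
  exact (Finset.Ico_disjoint_Ico_consecutive _ _ _).mono_right (Finset.Ico_subset_Ico_left hend)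

theorem validSchedule_slotSchedule {T : ℕ} (hτ : ∀ i, τ i ≤ T)
    (c : (conflictGraph W Rd).Coloring ℕ) : ValidSchedule W Rd τ (slotSchedule T c) := by
  intro i j hij
  rcases lt_or_gt_of_ne (c.valid hij) with hlt | hgt
  · exact disjoint_Ico_slot (hτ i) hlt
  · exact (disjoint_Ico_slot (hτ j) hgt).symm

section Finite

variable [Fintype ι]

/-- The transactions that write resource `r`. -/
def writers (W : ι → Finset (Fin s)) (r : Fin s) : Finset ι := {i | r ∈ W i}

/-- The largest number of writers of a single resource, `γ_max` in the paper; it is `0` when there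
are no resources. -/
def maxWriters (W : ι → Finset (Fin s)) : ℕ := Finset.univ.sup fun r => (writers W r).card

theorem mem_writers {i : ι} {r : Fin s} : i ∈ writers W r ↔ r ∈ W i := by
  simp [writers]

theorem card_writers_le_maxWriters (W : ι → Finset (Fin s)) (r : Fin s) :
    (writers W r).card ≤ maxWriters W :=
  Finset.le_sup (f := fun r => (writers W r).card) (Finset.mem_univ r)

theorem degree_conflictGraph_le (hRd : ∀ i, Rd i ⊆ W i) (i : ι)
    [Fintype ((conflictGraph W Rd).neighborSet i)] :
    (conflictGraph W Rd).degree i ≤ (W i).card * maxWriters W := by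
  classical
  have hsub : (conflictGraph W Rd).neighborFinset i ⊆ (W i).biUnion (writers W) := by
    intro j hj
    obtain ⟨r, hri, hrj⟩ :=
      Conflict.exists_mem_write hRd (((conflictGraph W Rd).mem_neighborFinset i j).1 hj)
    exact Finset.mem_biUnion.2 ⟨r, hri, mem_writers.2 hrj⟩
  calc (conflictGraph W Rd).degree i ≤ ((W i).biUnion (writers W)).card := Finset.card_le_card hsub
    _ ≤ (W i).card * maxWriters W :=
        Finset.card_biUnion_le_card_mul _ _ _ fun r _ => card_writers_le_maxWriters W r

theorem exists_conflictGraph_coloring_le {l : ℕ} (hRd : ∀ i, Rd i ⊆ W i)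
    (hW : ∀ i, (W i).card ≤ l) :
    ∃ c : (conflictGraph W Rd).Coloring ℕ, ∀ i, c i ≤ l * maxWriters W := by
  classical
  have hdeg : ∀ i, (conflictGraph W Rd).degree i ≤ l * maxWriters W := fun i =>
    (degree_conflictGraph_le hRd i).trans (Nat.mul_le_mul_right _ (hW i))
  obtain ⟨c, hc⟩ := ((conflictGraph W Rd).colorable_iff_exists_bdd_nat_coloring _).1
    (colorable_succ_of_degree_le hdeg)
  exact ⟨c, fun i => Nat.le_of_lt_succ (hc i)⟩

theorem start_add_duration_le_makespan (τ σ : ι → ℕ) (i : ι) : σ i + τ i ≤ makespan τ σ :=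
  Finset.le_sup (f := fun i => σ i + τ i) (Finset.mem_univ i)

theorem ValidSchedule.sum_duration_le_makespan (hσ : ValidSchedule W Rd τ σ) {S : Finset ι}
    (hS : (conflictGraph W Rd).IsClique S) : ∑ i ∈ S, τ i ≤ makespan τ σ := by
  classical
  have hdisj : (S : Set ι).PairwiseDisjoint fun i => Finset.Ico (σ i) (σ i + τ i) :=
    fun i hi j hj hij => hσ i j (hS hi hj hij)
  have hsub : S.biUnion (fun i => Finset.Ico (σ i) (σ i + τ i)) ⊆ Finset.range (makespan τ σ) := by
    refine Finset.biUnion_subset.2 fun i _ t ht => Finset.mem_range.2 ?_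
    exact (Finset.mem_Ico.1 ht).2.trans_le (start_add_duration_le_makespan τ σ i)
  calc ∑ i ∈ S, τ i = (S.biUnion fun i => Finset.Ico (σ i) (σ i + τ i)).card := by
        simp [Finset.card_biUnion hdisj]
    _ ≤ makespan τ σ := by simpa using Finset.card_le_card hsub

theorem isClique_writers (W Rd : ι → Finset (Fin s)) (r : Fin s) :
    (conflictGraph W Rd).IsClique (writers W r : Set ι) :=
  fun _ hi _ hj hij => conflict_of_mem_write hij (mem_writers.1 hi) (mem_writers.1 hj)

theorem ValidSchedule.maxWriters_mul_le_makespan (hσ : ValidSchedule W Rd τ σ) {t : ℕ}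
    (hτ : ∀ i, t ≤ τ i) : maxWriters W * t ≤ makespan τ σ := by
  have hwriters (r : Fin s) : (writers W r).card * t ≤ makespan τ σ :=
    calc (writers W r).card * t ≤ ∑ i ∈ writers W r, τ i :=
          Finset.card_nsmul_le_sum _ _ _ fun i _ => hτ i
      _ ≤ makespan τ σ := hσ.sum_duration_le_makespan (isClique_writers W Rd r)
  refine Finset.sup_induction (p := fun n => n * t ≤ makespan τ σ) (by simp) ?_
    fun r _ => hwriters r
  intro m hm n hn
  rcases max_choice m n with h | h <;> simpa only [h]

theorem makespan_slotSchedule_le_mul_makespan {k l t : ℕ} (hτ : ∀ i, t ≤ τ i) {c : ι → ℕ}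
    (hc : ∀ i, c i ≤ l * maxWriters W) (hσ : ValidSchedule W Rd τ σ) :
    makespan τ (slotSchedule (k * t) c) ≤ (k * l + 1) * makespan τ σ := by
  refine Finset.sup_le fun i _ => ?_
  have hduration : τ i ≤ makespan τ σ :=
    (Nat.le_add_left _ _).trans (start_add_duration_le_makespan τ σ i)
  calc c i * (k * t) + τ i ≤ l * maxWriters W * (k * t) + makespan τ σ :=
        Nat.add_le_add (Nat.mul_le_mul_right _ (hc i)) hduration
    _ = k * l * (maxWriters W * t) + makespan τ σ := by ring
    _ ≤ k * l * makespan τ σ + makespan τ σ := by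
        gcongr
        exact hσ.maxWriters_mul_le_makespan hτ
    _ = (k * l + 1) * makespan τ σ := by ring

end Finite

end Scheduling

theorem stmt5_general {ι : Type*} [Fintype ι] {s k l t : ℕ} (W Rd : ι → Finset (Fin s))
    (τ : ι → ℕ) (hRd : ∀ i, Rd i ⊆ W i) (hW : ∀ i, (W i).card ≤ l)
    (hτ : ∀ i, t ≤ τ i ∧ τ i ≤ k * t) :
    ∃ c : (conflictGraph W Rd).Coloring ℕ, (∀ i, c i ≤ l * maxWriters W) ∧
      ValidSchedule W Rd τ (slotSchedule (k * t) c) ∧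
      ∀ σ : ι → ℕ, ValidSchedule W Rd τ σ →
        makespan τ (slotSchedule (k * t) c) ≤ (k * l + 1) * makespan τ σ := by
  obtain ⟨c, hc⟩ := exists_conflictGraph_coloring_le hRd hW
  exact ⟨c, hc, validSchedule_slotSchedule (fun i => (hτ i).2) c,
    fun _ hσ => makespan_slotSchedule_le_mul_makespan (fun i => (hτ i).1) hc hσ⟩

/-- Per-subgroup competitive bound (Lemma 1): for write-only transactions with nonempty
write sets of size at most `λmax` and durations in `[τmin, 2·τmin]`, there is a valid
schedule whose makespan is within a factor `2·λmax + 2` of every valid schedule. -/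
theorem stmt5 {ι : Type*} [Fintype ι] {s lmax τmin : ℕ} (hτmin : 1 ≤ τmin)
    (W Rd : ι → Finset (Fin s)) (τ : ι → ℕ)
    (hRd : ∀ i, Rd i = ∅) (hW : ∀ i, (W i).Nonempty)
    (hlam : ∀ i, (W i).card ≤ lmax)
    (hτ : ∀ i, τmin ≤ τ i ∧ τ i ≤ 2 * τmin) :
    ∃ σ : ι → ℕ, ValidSchedule W Rd τ σ ∧
      ∀ σ' : ι → ℕ, ValidSchedule W Rd τ σ' →
        makespan τ σ ≤ (2 * lmax + 2) * makespan τ σ' := by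
  obtain ⟨c, -, hvalid, hle⟩ := stmt5_general W Rd τ (by simp [hRd]) hlam hτ
  exact ⟨_, hvalid, fun σ' hσ' => (hle σ' hσ').trans (Nat.mul_le_mul_right _ (by lia))⟩
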